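/- For every real numbers x1, x2, x3, x4 ≥ 0 with x1 + x2 + x3 + x4 = 1, we have 12·(x1·x2 + x3·x4)·(x1 + x2)·(x3 + x4) ≤ 3/8, with equality when x1 = x2 = x3 = x4 = 1/4. -/

import Mathlib

theorem stmt_0 :
    (∀ x1 x2 x3 x4 : ℝ, 0 ≤ x1 → 0 ≤ x2 → 0 ≤ x3 → 0 ≤ x4 →
      x1 + x2 + x3 + x4 = 1 →
      12 * (x1 * x2 + x3 * x4) * (x1 + x2) * (x3 + x4) ≤ 3 / 8) ∧
    12 * ((1/4 : ℝ) * (1/4) + (1/4) * (1/4)) * ((1/4 : ℝ) + 1/4) * ((1/4 : ℝ) + 1/4) = 3 / 8 := by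
  refine ⟨?_, by norm_num⟩
  intro x1 x2 x3 x4 h1 h2 h3 h4 h
  have hp : 0 ≤ (x1 + x2) * (x3 + x4) := by positivity
  have hq : 12 * (x1 * x2 + x3 * x4) ≤ 3 * (1 - 2 * ((x1 + x2) * (x3 + x4))) := by
    have e : (1 : ℝ) = (x1 + x2 + x3 + x4) ^ 2 := by rw [h]; norm_num
    nlinarith [sq_nonneg (x1 - x2), sq_nonneg (x3 - x4)]
  have hm := mul_le_mul_of_nonneg_right hq hp
  have e : 12 * (x1 * x2 + x3 * x4) * (x1 + x2) * (x3 + x4)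
      = 12 * (x1 * x2 + x3 * x4) * ((x1 + x2) * (x3 + x4)) := by ring
  nlinarith [sq_nonneg (4 * ((x1 + x2) * (x3 + x4)) - 1)]
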